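/- arXiv:1205.4889 — 2 statements merged into one kernel-verified Lean document; each statement's English description precedes it below -/
import Mathlib

section
/- For every quantitative two-player reachability game G and every depth d ≥ 0, the truncated game G^d played on the tree of histories of G of length at most d has a secure equilibrium. -/
/-- A quantitative multiplayer reachability game: a finite directed graph whose
vertex set is partitioned among the players (via `owner`), with an initial vertex `v0`,
an edge relation `E` such that every vertex has an outgoing edge, and a goal set
`goal i` for each player `i`. -/
structure ReachGame (P : Type) (V : Type) where
  owner : V → P
  v0 : V
  E : V → V → Prop
  total : ∀ v : V, ∃ w : V, E v w
  goal : P → Set V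

namespace ReachGame

variable {P V : Type} [DecidableEq P] (G : ReachGame P V)

/-- The last vertex of a history (with default `v0`). -/
def lastV (h : List V) : V := h.getLastD G.v0

/-- A history: a nonempty finite path in the graph starting at `v0`. -/
def IsHistory (h : List V) : Prop :=
  h ≠ [] ∧ h.head? = some G.v0 ∧ List.Chain' G.E h

/-- A play: an infinite path starting at `v0`. -/
def IsPlay (ρ : ℕ → V) : Prop :=
  ρ 0 = G.v0 ∧ ∀ k : ℕ, G.E (ρ k) (ρ (k + 1))

/-- `σ` is a (total encoding of a) strategy of player `i`: on every history ending in
a vertex owned by `i` it chooses a successor along an edge. -/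
def IsStrategy (i : P) (σ : List V → V) : Prop :=
  ∀ h : List V, G.IsHistory h → G.owner (G.lastV h) = i → G.E (G.lastV h) (σ h)

/-- A strategy profile: one strategy per player. -/
def IsProfile (prof : P → List V → V) : Prop :=
  ∀ i : P, G.IsStrategy i (prof i)

/-- The history of length `n` (i.e. with `n` edges) obtained by letting the players
follow the profile `prof` from `v0`. -/
def outHist (prof : P → List V → V) : ℕ → List V
  | 0 => [G.v0]
  | n + 1 => outHist prof n ++ [prof (G.owner (G.lastV (outHist prof n))) (outHist prof n)]

/-- The outcome play of the strategy profile `prof`. -/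
def outcome (prof : P → List V → V) (n : ℕ) : V :=
  G.lastV (G.outHist prof n)

/-- The cost of player `i` for the play `ρ`: the least `l` with `ρ l ∈ goal i`,
and `⊤` (`+∞`) if there is no such `l`. -/
noncomputable def cost (i : P) (ρ : ℕ → V) : ℕ∞ :=
  sInf {n : ℕ∞ | ∃ l : ℕ, n = (l : ℕ∞) ∧ ρ l ∈ G.goal i}

/-- Nash equilibrium: no player can strictly decrease his cost by a unilateral
deviation. -/
def IsNash (prof : P → List V → V) : Prop :=
  ∀ (j : P) (σ' : List V → V), G.IsStrategy j σ' →
    G.cost j (G.outcome prof) ≤ G.cost j (G.outcome (Function.update prof j σ'))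

/-- `h ≈_σ h'` : the strategy `σ` of player `i` behaves the same after `h` and `h'`,
i.e. `σ (h ++ δ) = σ (h' ++ δ)` for every suffix `δ` making both `h ++ δ` and
`h' ++ δ` histories ending in a vertex of player `i`. -/
def MemEq (i : P) (σ : List V → V) (h h' : List V) : Prop :=
  ∀ δ : List V,
    G.IsHistory (h ++ δ) → G.owner (G.lastV (h ++ δ)) = i →
    G.IsHistory (h' ++ δ) → G.owner (G.lastV (h' ++ δ)) = i →
    σ (h ++ δ) = σ (h' ++ δ)

/-- A strategy of player `i` is finite-memory if the relation `≈_σ` has finitely many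
equivalence classes on histories, i.e. there is a finite set of histories meeting
every class. -/
def FiniteMemory (i : P) (σ : List V → V) : Prop :=
  ∃ S : Finset (List V), ∀ h : List V, G.IsHistory h →
    ∃ h' ∈ S, G.IsHistory h' ∧ G.MemEq i σ h h'

/-- A profile is finite-memory if each of its strategies is. -/
def FiniteMemoryProfile (prof : P → List V → V) : Prop :=
  ∀ i : P, G.FiniteMemory i (prof i)

/-- `Visit h`: the set of players whose goal set is visited by the finite path `h`. -/
def visitL (h : List V) : Set P := {i : P | ∃ v ∈ h, v ∈ G.goal i}

/-- The type of a strategy profile: the set of players whose goal set is visited by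
the outcome. -/
def typeOf (prof : P → List V → V) : Set P :=
  {i : P | ∃ l : ℕ, G.outcome prof l ∈ G.goal i}

/-! ### The truncated game `G^d` -/

/-- A strategy of player `i` in the truncated game `G^d` : it chooses a successor on
every history with less than `d` edges (list length `≤ d`) ending in a vertex of `i`. -/
def IsStrategyTrunc (d : ℕ) (i : P) (σ : List V → V) : Prop :=
  ∀ h : List V, G.IsHistory h → h.length ≤ d → G.owner (G.lastV h) = i →
    G.E (G.lastV h) (σ h)

/-- A strategy profile of the truncated game `G^d`. -/
def IsProfileTrunc (d : ℕ) (prof : P → List V → V) : Prop :=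
  ∀ i : P, G.IsStrategyTrunc d i (prof i)

/-- The cost of player `i` for a finite play `h` (a list of vertices): the least
position of `h` lying in `goal i`, and `⊤` if `goal i` is not visited. -/
noncomputable def costList (i : P) (h : List V) : ℕ∞ :=
  sInf {n : ℕ∞ | ∃ l : ℕ, n = (l : ℕ∞) ∧ l < h.length ∧ h.getD l G.v0 ∈ G.goal i}

/-- Nash equilibrium of the truncated game `G^d` (whose plays are the histories with
exactly `d` edges). -/
def IsNashTrunc (d : ℕ) (prof : P → List V → V) : Prop :=
  ∀ (j : P) (σ' : List V → V), G.IsStrategyTrunc d j σ' →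
    G.costList j (G.outHist prof d) ≤
      G.costList j (G.outHist (Function.update prof j σ') d)

/-- The type of a strategy profile of the truncated game `G^d`. -/
def typeOfTrunc (d : ℕ) (prof : P → List V → V) : Set P :=
  G.visitL (G.outHist prof d)

end ReachGame

/-- `(x₁,x₂) ≺₁ (y₁,y₂)` iff `x₁ > y₁`, or `x₁ = y₁` and `x₂ < y₂` :
player 1 prefers the cost profile `y` to `x`. -/
def prec1 (x y : ℕ∞ × ℕ∞) : Prop := y.1 < x.1 ∨ (x.1 = y.1 ∧ x.2 < y.2)

/-- `(x₁,x₂) ≺₂ (y₁,y₂)` iff `x₂ > y₂`, or `x₂ = y₂` and `x₁ < y₁` :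
player 2 prefers the cost profile `y` to `x`. -/
def prec2 (x y : ℕ∞ × ℕ∞) : Prop := y.2 < x.2 ∨ (x.2 = y.2 ∧ x.1 < y.1)

namespace ReachGame

variable {V : Type} (G : ReachGame (Fin 2) V)

/-- The pair of costs of the two players for the play `ρ`. -/
noncomputable def costPair (ρ : ℕ → V) : ℕ∞ × ℕ∞ := (G.cost 0 ρ, G.cost 1 ρ)

/-- Secure equilibrium: no player `j` has a `≺ⱼ`-profitable deviation. -/
def IsSecure (prof : Fin 2 → List V → V) : Prop :=
  (∀ σ' : List V → V, G.IsStrategy 0 σ' →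
    ¬ prec1 (G.costPair (G.outcome prof))
        (G.costPair (G.outcome (Function.update prof 0 σ')))) ∧
  (∀ σ' : List V → V, G.IsStrategy 1 σ' →
    ¬ prec2 (G.costPair (G.outcome prof))
        (G.costPair (G.outcome (Function.update prof 1 σ'))))

/-- The pair of costs of the two players for a finite play `h`. -/
noncomputable def costListPair (h : List V) : ℕ∞ × ℕ∞ := (G.costList 0 h, G.costList 1 h)

/-- Secure equilibrium of the truncated game `G^d`. -/
def IsSecureTrunc (d : ℕ) (prof : Fin 2 → List V → V) : Prop :=
  (∀ σ' : List V → V, G.IsStrategyTrunc d 0 σ' →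
    ¬ prec1 (G.costListPair (G.outHist prof d))
        (G.costListPair (G.outHist (Function.update prof 0 σ') d))) ∧
  (∀ σ' : List V → V, G.IsStrategyTrunc d 1 σ' →
    ¬ prec2 (G.costListPair (G.outHist prof d))
        (G.costListPair (G.outHist (Function.update prof 1 σ') d)))

end ReachGame

/-!
Backward induction. Give each player a linearly ordered cost of the plays of `G^d` whose set of
values is well-founded, and let the owner of every history pick a successor from which optimal
continuation is cheapest for him. As long as his opponents follow these choices, each move of a
deviating player can only raise the cost, for him, of continuing optimally; at depth `d` this is
the cost of the play itself, so no deviation is profitable. Secure equilibria are the case where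
player `i` compares cost profiles lexicographically, first by his own cost and then by the reversed
cost of his opponent; costs of plays of `G^d` lie in `{0, …, d, ⊤}`, so only finitely many values
occur.
-/

namespace ReachGame

section BackwardInduction

variable {P V : Type} (G : ReachGame P V)

/-- The histories with exactly `n` edges, i.e. with `n + 1` vertices; for `n = d` these are the
plays of the truncated game `G^d`. -/
def historiesOfLength (n : ℕ) : Set (List V) :=
  {h | G.IsHistory h ∧ h.length = n + 1}

theorem singleton_mem_historiesOfLength_zero : [G.v0] ∈ G.historiesOfLength 0 :=
  ⟨⟨List.cons_ne_nil _ _, rfl, List.isChain_singleton _⟩, rfl⟩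

variable {G} in
theorem append_mem_historiesOfLength {n : ℕ} {h : List V} {w : V}
    (hh : h ∈ G.historiesOfLength n) (hw : G.E (G.lastV h) w) :
    h ++ [w] ∈ G.historiesOfLength (n + 1) := by
  obtain ⟨⟨-, hhead, hchain⟩, hlen⟩ := hh
  refine ⟨⟨by simp, by simp [List.head?_append, hhead], ?_⟩, by simp [hlen]⟩
  refine List.IsChain.append hchain (List.isChain_singleton w) fun x hx y hy => ?_
  have hlast : G.lastV h = x := by
    rw [lastV, List.getLastD_eq_getLast?, Option.mem_def.1 hx, Option.getD_some]
  obtain rfl : w = y := by simpa using hy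
  exact hlast ▸ hw

variable {G} in
theorem outHist_mem_historiesOfLength {d : ℕ} {prof : P → List V → V}
    (hprof : G.IsProfileTrunc d prof) {n : ℕ} (hn : n ≤ d) :
    G.outHist prof n ∈ G.historiesOfLength n := by
  induction n with
  | zero => exact G.singleton_mem_historiesOfLength_zero
  | succ n ih =>
    have hmem := ih (by lia)
    exact append_mem_historiesOfLength hmem
      (hprof _ _ hmem.1 (by rw [hmem.2]; exact hn) rfl)

variable {G} in
theorem IsProfileTrunc.update [DecidableEq P] {d : ℕ} {prof : P → List V → V}
    (hprof : G.IsProfileTrunc d prof) {j : P} {σ : List V → V} (hσ : G.IsStrategyTrunc d j σ) :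
    G.IsProfileTrunc d (Function.update prof j σ) := by
  intro i
  obtain rfl | hij := eq_or_ne i j
  · rwa [Function.update_self]
  · rw [Function.update_of_ne hij]
    exact hprof i

variable {α : Type*} [LinearOrder α]

open Classical in
/-- A successor of `v` at which `f` is minimal among the successors of `v`. If `f` has no minimum
there, it is an arbitrary successor, so that it always follows an edge. -/
noncomputable def bestSucc (v : V) (f : V → α) : V :=
  if hmin : ∃ w, G.E v w ∧ ∀ w', G.E v w' → f w ≤ f w' then hmin.choose else (G.total v).choose

theorem bestSucc_edge (v : V) (f : V → α) : G.E v (G.bestSucc v f) := by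
  rw [bestSucc]
  split_ifs with hmin
  · exact hmin.choose_spec.1
  · exact (G.total v).choose_spec

variable {G} in
theorem bestSucc_le {v w : V} {f : V → α} (hf : (f '' {u | G.E v u}).IsWF) (hw : G.E v w) :
    f (G.bestSucc v f) ≤ f w := by
  have hmin : ∃ u, G.E v u ∧ ∀ w', G.E v w' → f u ≤ f w' := by
    have hne : (f '' {u | G.E v u}).Nonempty := ⟨f w, w, hw, rfl⟩
    obtain ⟨u, hu, hfu⟩ := hf.min_mem hne
    exact ⟨u, hu, fun w' hw' => hfu ▸ hf.min_le hne ⟨w', hw', rfl⟩⟩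
  rw [bestSucc, dif_pos hmin]
  exact hmin.choose_spec.2 w hw

/-- The equilibrium condition of the truncated game `G^d` in which `c i` is the cost of player `i`:
no player can strictly decrease his cost by a unilateral deviation. `IsNashTrunc` is the case
`c = G.costList`. -/
def IsEquilibriumTrunc [DecidableEq P] (c : P → List V → α) (d : ℕ) (prof : P → List V → V) :
    Prop :=
  ∀ (j : P) (σ : List V → V), G.IsStrategyTrunc d j σ →
    c j (G.outHist prof d) ≤ c j (G.outHist (Function.update prof j σ) d)

variable (c : P → List V → α)

/-- The move at `h` that is cheapest for the owner of the last vertex of `h`, when every history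
`h'` one step longer is going to be extended to the play `next h'`. -/
noncomputable def greedyMove (next : List V → List V) (h : List V) : V :=
  G.bestSucc (G.lastV h) fun w => c (G.owner (G.lastV h)) (next (h ++ [w]))

/-- The extension of `h` by the `n` moves prescribed by backward induction. -/
noncomputable def optimalPlay : ℕ → List V → List V
  | 0, h => h
  | n + 1, h => optimalPlay n (h ++ [G.greedyMove c (optimalPlay n) h])

/-- The profile of `G^d` obtained by backward induction. A history with `k < d` edges is a list of
length `k + 1`, so `d - h.length` moves remain after the one chosen at `h`. -/
noncomputable def optimalProfile (d : ℕ) : P → List V → V :=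
  fun _ h => G.greedyMove c (G.optimalPlay c (d - h.length)) h

theorem greedyMove_edge (next : List V → List V) (h : List V) :
    G.E (G.lastV h) (G.greedyMove c next h) :=
  G.bestSucc_edge _ _

theorem isProfileTrunc_optimalProfile (d : ℕ) : G.IsProfileTrunc d (G.optimalProfile c d) :=
  fun _ _ _ _ _ => G.greedyMove_edge _ _ _

variable {G} {c}

theorem optimalPlay_mem_historiesOfLength {k n : ℕ} {h : List V}
    (hh : h ∈ G.historiesOfLength k) : G.optimalPlay c n h ∈ G.historiesOfLength (k + n) := by
  induction n generalizing k h with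
  | zero => exact hh
  | succ n ih =>
    rw [optimalPlay, Nat.add_comm n 1, ← Nat.add_assoc]
    exact ih (append_mem_historiesOfLength hh (G.greedyMove_edge _ _ _))

theorem optimalPlay_succ_le {k n : ℕ} {h : List V} {w : V} (hh : h ∈ G.historiesOfLength k)
    (hc : (c (G.owner (G.lastV h)) '' G.historiesOfLength (k + (n + 1))).IsWF)
    (hw : G.E (G.lastV h) w) :
    c (G.owner (G.lastV h)) (G.optimalPlay c (n + 1) h) ≤
      c (G.owner (G.lastV h)) (G.optimalPlay c n (h ++ [w])) := by
  refine bestSucc_le (f := fun u => c (G.owner (G.lastV h)) (G.optimalPlay c n (h ++ [u])))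
    (hc.mono ?_) hw
  rintro _ ⟨u, hu, rfl⟩
  refine Set.mem_image_of_mem _ ?_
  rw [Nat.add_comm n 1, ← Nat.add_assoc]
  exact optimalPlay_mem_historiesOfLength (append_mem_historiesOfLength hh hu)

theorem optimalPlay_append_optimalProfile {d k n : ℕ} (hd : k + (n + 1) = d) {h : List V}
    (hh : h ∈ G.historiesOfLength k) (i : P) :
    G.optimalPlay c n (h ++ [G.optimalProfile c d i h]) = G.optimalPlay c (n + 1) h := by
  have hremaining : d - h.length = n := by rw [hh.2]; lia
  rw [optimalProfile, hremaining, optimalPlay]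

theorem optimalPlay_outHist_optimalProfile {d k n : ℕ} (hd : k + n = d) :
    G.optimalPlay c n (G.outHist (G.optimalProfile c d) k) = G.optimalPlay c d [G.v0] := by
  induction k generalizing n with
  | zero => rw [← hd, Nat.zero_add, outHist]
  | succ k ih =>
    have hd' : k + (n + 1) = d := by lia
    have hmem : G.outHist (G.optimalProfile c d) k ∈ G.historiesOfLength k :=
      outHist_mem_historiesOfLength (G.isProfileTrunc_optimalProfile c d) (by lia)
    rw [outHist, optimalPlay_append_optimalProfile hd' hmem, ih hd']

theorem optimalPlay_succ_le_of_update [DecidableEq P] {d : ℕ} {j : P} {σ : List V → V}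
    (hc : (c j '' G.historiesOfLength d).IsWF) (hσ : G.IsStrategyTrunc d j σ) {k n : ℕ}
    (hd : k + (n + 1) = d) {h : List V} (hh : h ∈ G.historiesOfLength k) :
    c j (G.optimalPlay c (n + 1) h) ≤ c j (G.optimalPlay c n
      (h ++ [Function.update (G.optimalProfile c d) j σ (G.owner (G.lastV h)) h])) := by
  obtain rfl | howner := eq_or_ne (G.owner (G.lastV h)) j
  · rw [Function.update_self]
    exact optimalPlay_succ_le hh (hd ▸ hc) (hσ h hh.1 (by rw [hh.2]; lia) rfl)
  · rw [Function.update_of_ne howner, optimalPlay_append_optimalProfile hd hh]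

theorem optimalPlay_le_optimalPlay_outHist_update [DecidableEq P] {d : ℕ} {j : P}
    {σ : List V → V} (hc : (c j '' G.historiesOfLength d).IsWF) (hσ : G.IsStrategyTrunc d j σ)
    {k n : ℕ} (hd : k + n = d) :
    c j (G.optimalPlay c d [G.v0]) ≤
      c j (G.optimalPlay c n (G.outHist (Function.update (G.optimalProfile c d) j σ) k)) := by
  induction k generalizing n with
  | zero => rw [← hd, Nat.zero_add, outHist]
  | succ k ih =>
    have hd' : k + (n + 1) = d := by lia
    have hmem := outHist_mem_historiesOfLength
      ((G.isProfileTrunc_optimalProfile c d).update hσ) (show k ≤ d by lia)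
    exact (ih hd').trans (optimalPlay_succ_le_of_update hc hσ hd' hmem)

theorem isEquilibriumTrunc_optimalProfile [DecidableEq P] {d : ℕ}
    (hc : ∀ i, (c i '' G.historiesOfLength d).IsWF) :
    G.IsEquilibriumTrunc c d (G.optimalProfile c d) := by
  intro j σ hσ
  have houtcome : G.outHist (G.optimalProfile c d) d = G.optimalPlay c d [G.v0] :=
    optimalPlay_outHist_optimalProfile (n := 0) (Nat.add_zero d)
  rw [houtcome]
  exact optimalPlay_le_optimalPlay_outHist_update (hc j) hσ (n := 0) (Nat.add_zero d)

end BackwardInduction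

section Secure

variable {P V : Type}

theorem costList_eq_top_or_exists_lt_length (G : ReachGame P V) (i : P) (h : List V) :
    G.costList i h = ⊤ ∨ ∃ l < h.length, G.costList i h = l := by
  rw [costList]
  obtain hempty | hne := Set.eq_empty_or_nonempty
    {n : ℕ∞ | ∃ l : ℕ, n = (l : ℕ∞) ∧ l < h.length ∧ h.getD l G.v0 ∈ G.goal i}
  · exact .inl (by rw [hempty, sInf_empty])
  · obtain ⟨l, hl, hlt, -⟩ := csInf_mem hne
    exact .inr ⟨l, hlt, hl⟩

theorem finite_costList_image (G : ReachGame P V) (i : P) (n : ℕ) :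
    (G.costList i '' G.historiesOfLength n).Finite := by
  refine (((Set.finite_Iio (n + 1)).image ((↑) : ℕ → ℕ∞)).insert ⊤).subset ?_
  rintro _ ⟨h, ⟨-, hlen⟩, rfl⟩
  obtain htop | ⟨l, hlt, hl⟩ := G.costList_eq_top_or_exists_lt_length i h
  · exact .inl htop
  · exact .inr ⟨l, hlen ▸ hlt, hl.symm⟩

variable (G : ReachGame (Fin 2) V)

/-- The cost whose strict decrease is the preference `≺ᵢ`: player `i` minimises his own cost and,
among plays of equal cost, maximises that of his opponent `1 - i`. -/
noncomputable def secureCost (i : Fin 2) (h : List V) : ℕ∞ ×ₗ ℕ∞ᵒᵈ :=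
  toLex (G.costList i h, OrderDual.toDual (G.costList (1 - i) h))

theorem finite_secureCost_image (i : Fin 2) (n : ℕ) :
    (G.secureCost i '' G.historiesOfLength n).Finite := by
  refine ((G.finite_costList_image i n).image2 (fun x y => toLex (x, OrderDual.toDual y))
    (G.finite_costList_image (1 - i) n)).subset ?_
  rintro _ ⟨h, hh, rfl⟩
  exact ⟨_, ⟨h, hh, rfl⟩, _, ⟨h, hh, rfl⟩, rfl⟩

theorem prec1_costListPair_iff (h h' : List V) :
    prec1 (G.costListPair h) (G.costListPair h') ↔ G.secureCost 0 h' < G.secureCost 0 h := by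
  simp [prec1, costListPair, secureCost, Prod.Lex.toLex_lt_toLex, eq_comm]

theorem prec2_costListPair_iff (h h' : List V) :
    prec2 (G.costListPair h) (G.costListPair h') ↔ G.secureCost 1 h' < G.secureCost 1 h := by
  simp [prec2, costListPair, secureCost, Prod.Lex.toLex_lt_toLex, eq_comm]

theorem isSecureTrunc_iff_isEquilibriumTrunc (d : ℕ) (prof : Fin 2 → List V → V) :
    G.IsSecureTrunc d prof ↔ G.IsEquilibriumTrunc G.secureCost d prof := by
  simp only [IsSecureTrunc, IsEquilibriumTrunc, Fin.forall_fin_two, prec1_costListPair_iff,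
    prec2_costListPair_iff, not_lt]

end Secure

end ReachGame

theorem trunc_secure_exists_general {V : Type} (G : ReachGame (Fin 2) V) (d : ℕ) :
    ∃ prof : Fin 2 → List V → V, G.IsProfileTrunc d prof ∧ G.IsSecureTrunc d prof :=
  ⟨G.optimalProfile G.secureCost d, G.isProfileTrunc_optimalProfile G.secureCost d,
    (G.isSecureTrunc_iff_isEquilibriumTrunc d _).2 <|
      ReachGame.isEquilibriumTrunc_optimalProfile fun i => (G.finite_secureCost_image i d).isWF⟩

/-- For every quantitative two-player reachability game `G` and
every depth `d ≥ 0`, the truncated game `G^d` has a secure equilibrium. -/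
theorem trunc_secure_exists {V : Type} [Fintype V]
    (G : ReachGame (Fin 2) V) (d : ℕ) :
    ∃ prof : Fin 2 → List V → V,
      G.IsProfileTrunc d prof ∧ G.IsSecureTrunc d prof :=
  trunc_secure_exists_general G d
end

section
/- Let G be a quantitative two-player reachability game. If there exists a secure equilibrium of a certain type in G, then there exists a depth d ≥ (|Π|+1)·2·|V| and a secure equilibrium of the same type in the truncated game G^d. -/
/-!
Truncation at depth `d` acts on costs by the monotone, inflationary map `T` sending every cost above
`d` to `⊤`. Once `d` exceeds the finite costs of the equilibrium outcome, `T` fixes the equilibrium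
costs `(x₁, x₂)`. A deviation in `G^d` extends to a strategy of `G`, say with costs `(y₁, y₂)`, and
its costs in `G^d` are `(T y₁, T y₂)`. Since `T yᵢ ≤ xᵢ ↔ yᵢ ≤ xᵢ` at a fixed point `xᵢ` of `T`, a
deviation profitable in `G^d` is already profitable in `G`. Hence the equilibrium of `G` itself is
an equilibrium of `G^d` for all large `d`.
-/

theorem sInf_natCast_le_iff (p : ℕ → Prop) (n : ℕ) :
    sInf {m : ℕ∞ | ∃ l : ℕ, m = l ∧ p l} ≤ n ↔ ∃ l ≤ n, p l := by
  rw [← ENat.lt_add_one_iff (ENat.natCast_ne_top n), sInf_lt_iff]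
  constructor
  · rintro ⟨_, ⟨l, rfl, hl⟩, hlt⟩
    exact ⟨l, Nat.lt_succ_iff.mp (by exact_mod_cast hlt), hl⟩
  · rintro ⟨l, hln, hl⟩
    exact ⟨l, ⟨l, rfl, hl⟩, by exact_mod_cast Nat.lt_succ_iff.mpr hln⟩

theorem sInf_natCast_ne_top_iff (p : ℕ → Prop) :
    sInf {m : ℕ∞ | ∃ l : ℕ, m = l ∧ p l} ≠ ⊤ ↔ ∃ l, p l := by
  simp [sInf_eq_top]

namespace ReachGame

section TruncCost

variable {d : ℕ} {x y : ℕ∞}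

/-- The effect on a cost of cutting plays off after `d` edges: goals reached at position `d` or
earlier are still seen, later ones count as never reached. -/
noncomputable def truncCost (d : ℕ) (c : ℕ∞) : ℕ∞ := if c ≤ d then c else ⊤

theorem truncCost_le_natCast_iff {n : ℕ} : truncCost d x ≤ n ↔ x ≤ n ∧ x ≤ d := by
  unfold truncCost
  split_ifs with hxd <;> simp [hxd]

theorem le_truncCost (d : ℕ) (c : ℕ∞) : c ≤ truncCost d c := by
  unfold truncCost
  split_ifs <;> simp

theorem truncCost_mono (d : ℕ) : Monotone (truncCost d) := by
  intro a b hab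
  unfold truncCost
  split_ifs with ha hb hb
  · exact hab
  · exact le_top
  · exact absurd (hab.trans hb) ha
  · exact le_rfl

theorem truncCost_le_iff_of_truncCost_eq_self (hx : truncCost d x = x) :
    truncCost d y ≤ x ↔ y ≤ x :=
  ⟨(le_truncCost d y).trans, fun hyx => (truncCost_mono d hyx).trans_eq hx⟩

theorem eventually_truncCost_eq_self (c : ℕ∞) : ∀ᶠ d in Filter.atTop, truncCost d c = c := by
  induction c using ENat.recTopCoe with
  | top => simp [truncCost]
  | coe n =>
    filter_upwards [Filter.eventually_ge_atTop n] with d hnd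
    exact if_pos (Nat.cast_le.mpr hnd)

theorem prec1_of_prec1_map_truncCost {x y : ℕ∞ × ℕ∞} (hx : truncCost d x.2 = x.2)
    (h : prec1 x (y.map (truncCost d) (truncCost d))) : prec1 x y := by
  rcases h with hlt | ⟨heq, hlt⟩
  · exact Or.inl ((le_truncCost d y.1).trans_lt hlt)
  · have hle : y.1 ≤ x.1 := (le_truncCost d y.1).trans_eq heq.symm
    have hlt' : x.2 < y.2 :=
      (lt_iff_lt_of_le_iff_le (truncCost_le_iff_of_truncCost_eq_self hx)).mp hlt
    exact hle.lt_or_eq.imp_right fun h => ⟨h.symm, hlt'⟩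

theorem prec2_of_prec2_map_truncCost {x y : ℕ∞ × ℕ∞} (hx : truncCost d x.1 = x.1)
    (h : prec2 x (y.map (truncCost d) (truncCost d))) : prec2 x y :=
  prec1_of_prec1_map_truncCost (x := x.swap) (y := y.swap) hx h

end TruncCost

section Cost

variable {P V : Type} (G : ReachGame P V)

theorem mem_typeOf_iff (p : P → List V → V) (i : P) :
    i ∈ G.typeOf p ↔ G.cost i (G.outcome p) ≠ ⊤ :=
  (sInf_natCast_ne_top_iff _).symm

theorem mem_visitL_iff (h : List V) (i : P) : i ∈ G.visitL h ↔ G.costList i h ≠ ⊤ := by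
  rw [costList, sInf_natCast_ne_top_iff]
  constructor
  · rintro ⟨v, hv, hgoal⟩
    obtain ⟨l, hl, rfl⟩ := List.mem_iff_getElem.mp hv
    exact ⟨l, hl, by rwa [List.getD_eq_getElem _ _ hl]⟩
  · rintro ⟨l, hl, hgoal⟩
    rw [List.getD_eq_getElem _ _ hl] at hgoal
    exact ⟨_, List.getElem_mem hl, hgoal⟩

theorem length_outHist (p : P → List V → V) (n : ℕ) : (G.outHist p n).length = n + 1 := by
  induction n with
  | zero => rfl
  | succ n ih => simp [outHist, ih]

theorem getD_outHist (p : P → List V → V) {l n : ℕ} (hln : l ≤ n) :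
    (G.outHist p n).getD l G.v0 = G.outcome p l := by
  induction n, hln using Nat.le_induction with
  | base =>
    cases l with
    | zero => rfl
    | succ l => simp [outcome, lastV, outHist, length_outHist]
  | succ n hln ih =>
    have hlt : l < (G.outHist p n).length := by rw [length_outHist]; omega
    rw [outHist, List.getD_append _ _ _ _ hlt, ih]

theorem costList_outHist (p : P → List V → V) (d : ℕ) (i : P) :
    G.costList i (G.outHist p d) = truncCost d (G.cost i (G.outcome p)) := by
  refine eq_of_forall_ge_iff fun c => ?_
  induction c using ENat.recTopCoe with
  | top => simp
  | coe n =>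
    calc G.costList i (G.outHist p d) ≤ n
        ↔ ∃ l ≤ n, l ≤ d ∧ G.outcome p l ∈ G.goal i := by
          rw [costList, sInf_natCast_le_iff, length_outHist]
          refine exists_congr fun l => and_congr_right fun _ => ?_
          rw [Nat.lt_succ_iff]
          exact and_congr_right fun hld => by rw [G.getD_outHist p hld]
      _ ↔ G.cost i (G.outcome p) ≤ (min n d : ℕ) := by
          simp only [cost, sInf_natCast_le_iff, le_min_iff, and_assoc]
      _ ↔ truncCost d (G.cost i (G.outcome p)) ≤ n := by
          rw [truncCost_le_natCast_iff, Nat.mono_cast.map_min, le_min_iff]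

theorem typeOfTrunc_eq_typeOf {p : P → List V → V} {d : ℕ}
    (hfix : ∀ i, truncCost d (G.cost i (G.outcome p)) = G.cost i (G.outcome p)) :
    G.typeOfTrunc d p = G.typeOf p := by
  ext i
  rw [typeOfTrunc, mem_visitL_iff, costList_outHist, hfix, mem_typeOf_iff]

end Cost

section Strategy

variable {P V : Type} {G : ReachGame P V}

theorem IsProfile.isProfileTrunc {p : P → List V → V} (hp : G.IsProfile p) (d : ℕ) :
    G.IsProfileTrunc d p :=
  fun i h hh _ howner => hp i h hh howner

theorem IsStrategyTrunc.exists_isStrategy {d : ℕ} {j : P} {σ : List V → V}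
    (hσ : G.IsStrategyTrunc d j σ) :
    ∃ σ', G.IsStrategy j σ' ∧ ∀ h : List V, h.length ≤ d → σ' h = σ h := by
  choose succ hsucc using G.total
  refine ⟨fun h => if h.length ≤ d then σ h else succ (G.lastV h), fun h hh howner => ?_,
    fun h hd => if_pos hd⟩
  dsimp only
  split_ifs with hd
  · exact hσ h hh hd howner
  · exact hsucc _

theorem outHist_congr {p q : P → List V → V} {n : ℕ}
    (hpq : ∀ (i : P) (h : List V), h.length ≤ n → p i h = q i h) :
    G.outHist p n = G.outHist q n := by
  induction n with
  | zero => rfl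
  | succ n ih =>
    rw [outHist, outHist, ih fun i h hn => hpq i h (hn.trans n.le_succ),
      hpq _ _ (G.length_outHist q n).le]

theorem IsStrategyTrunc.exists_isStrategy_outHist_update_eq [DecidableEq P] {d : ℕ} {j : P}
    {σ : List V → V} (hσ : G.IsStrategyTrunc d j σ) (p : P → List V → V) :
    ∃ σ', G.IsStrategy j σ' ∧
      G.outHist (Function.update p j σ) d = G.outHist (Function.update p j σ') d := by
  obtain ⟨σ', hσ', hagree⟩ := hσ.exists_isStrategy
  refine ⟨σ', hσ', outHist_congr fun i h hd => ?_⟩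
  obtain rfl | hij := eq_or_ne i j
  · simp only [Function.update_self, hagree h hd]
  · simp only [Function.update_of_ne hij]

end Strategy

section Secure

variable {V : Type} {G : ReachGame (Fin 2) V} {p : Fin 2 → List V → V} {d : ℕ}

variable (G p d) in
theorem costListPair_outHist :
    G.costListPair (G.outHist p d) =
      (G.costPair (G.outcome p)).map (truncCost d) (truncCost d) := by
  simp only [costListPair, costPair, costList_outHist, Prod.map_apply]

theorem IsSecure.isSecureTrunc (hsec : G.IsSecure p)
    (hfix : ∀ i, truncCost d (G.cost i (G.outcome p)) = G.cost i (G.outcome p)) :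
    G.IsSecureTrunc d p := by
  have hpair : G.costListPair (G.outHist p d) = G.costPair (G.outcome p) := by
    simp only [costListPair_outHist, costPair, Prod.map_apply, hfix]
  constructor
  · intro σ hσ hprec
    obtain ⟨σ', hσ', heq⟩ := hσ.exists_isStrategy_outHist_update_eq p
    rw [hpair, heq, costListPair_outHist] at hprec
    exact hsec.1 σ' hσ' (prec1_of_prec1_map_truncCost (hfix 1) hprec)
  · intro σ hσ hprec
    obtain ⟨σ', hσ', heq⟩ := hσ.exists_isStrategy_outHist_update_eq p
    rw [hpair, heq, costListPair_outHist] at hprec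
    exact hsec.2 σ' hσ' (prec2_of_prec2_map_truncCost (hfix 0) hprec)

end Secure

end ReachGame

theorem secure_to_trunc_secure_general {V : Type} (G : ReachGame (Fin 2) V)
    (prof : Fin 2 → List V → V) (hprof : G.IsProfile prof) (hsec : G.IsSecure prof) :
    ∀ᶠ d in Filter.atTop,
      G.IsProfileTrunc d prof ∧ G.IsSecureTrunc d prof ∧
        G.typeOfTrunc d prof = G.typeOf prof := by
  have hfix : ∀ᶠ d in Filter.atTop, ∀ i,
      ReachGame.truncCost d (G.cost i (G.outcome prof)) = G.cost i (G.outcome prof) :=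
    Filter.eventually_all.mpr fun _ => ReachGame.eventually_truncCost_eq_self _
  filter_upwards [hfix] with d hd
  exact ⟨hprof.isProfileTrunc d, hsec.isSecureTrunc hd, G.typeOfTrunc_eq_typeOf hd⟩

/-- If a quantitative two-player reachability game `G` has a secure
equilibrium of a certain type, then there exist a depth `d ≥ (|Π|+1)·2·|V|` and a
secure equilibrium of the same type in the truncated game `G^d`. -/
theorem secure_to_trunc_secure {V : Type} [Fintype V]
    (G : ReachGame (Fin 2) V)
    (prof : Fin 2 → List V → V) (hprof : G.IsProfile prof) (hsec : G.IsSecure prof) :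
    ∃ d : ℕ, (Fintype.card (Fin 2) + 1) * 2 * Fintype.card V ≤ d ∧
      ∃ τ : Fin 2 → List V → V,
        G.IsProfileTrunc d τ ∧ G.IsSecureTrunc d τ ∧
        G.typeOfTrunc d τ = G.typeOf prof := by
  obtain ⟨d, hd, hcard⟩ := ((secure_to_trunc_secure_general G prof hprof hsec).and
    (Filter.eventually_ge_atTop ((Fintype.card (Fin 2) + 1) * 2 * Fintype.card V))).exists
  exact ⟨d, hcard, prof, hd⟩
end
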